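/- arXiv:1709.01652 — 3 statements merged into one kernel-verified Lean document; each statement's English description precedes it below -/
import Mathlib

section
/- (Lipschitz shadowing for expanding sequences.) Let 𝓕 = {f_n}_{n≥0} be a sequence of expanding maps between nonempty complete metric spaces X_n, with constants δ₀ > 0 and (λ_n)_{n≥0} satisfying λ := sup_n λ_n < 1. Then for every δ with 0 < δ < δ₀ and every ζ with 0 < ζ ≤ min{(1−λ)δ/λ, δ₀ − δ}, every ζ-pseudo-orbit (x_n)_{n≥0} for 𝓕 is δ-shadowed by a point of X₀: there exists x ∈ X₀ such that d(F_n(x), x_n) ≤ δ for every n ≥ 0. In particular 𝓕 has the Lipschitz shadowing property. -/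
/-!
Let `g n` be the inverse branch of `f n` on `B(f n (p n), δ₀)` with `g n (f n (p n)) = p n`.
Since `δ + ζ ≤ δ₀`, the closed ball `B̄(p (n + 1), δ)` lies in the domain of `g n`, and
`Λ (δ + ζ) ≤ δ` shows that `g n` maps it into `B̄(p n, δ)`, contracting distances by `Λ`.
Pulling back the centres, the points `g n (g (n + 1) (⋯ (p (n + k))))` form, for each fixed `n`,
a Cauchy sequence in `k` (`pullback_dist_succ_le`). The limits `w n ∈ B̄(p n, δ)` satisfy
`f n (w n) = w (n + 1)` by continuity of `f n`, so `w 0` has orbit `w`, which shadows `p`.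
-/

/-- Compositions `F_0 = id`, `F_{n+1} = f_n ∘ F_n` of a sequence of maps
`f_n : X_n → X_{n+1}` between (possibly different) spaces. -/
def seqComp {X : ℕ → Type*} (f : ∀ n, X n → X (n + 1)) : ∀ n, X 0 → X n
  | 0 => id
  | n + 1 => f n ∘ seqComp f n

/-- `𝓕 = {f_n}` is a sequence of expanding maps with constants `δ₀ > 0` and
`(lam n)`: each `f_n` is onto and every preimage `xi` of a point `x` admits an
inverse branch on the ball `B(x, δ₀)` sending `x` to `xi` and contracting
distances by the factor `lam n`. -/
def IsExpandingSeq {X : ℕ → Type*} [∀ n, MetricSpace (X n)]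
    (f : ∀ n, X n → X (n + 1)) (δ₀ : ℝ) (lam : ℕ → ℝ) : Prop :=
  (∀ n, Function.Surjective (f n)) ∧
  ∀ n, ∀ x : X (n + 1), ∀ xi : X n, f n xi = x →
    ∃ g : X (n + 1) → X n,
      (∀ y ∈ Metric.ball x δ₀, f n (g y) = y) ∧
      g x = xi ∧
      ∀ y ∈ Metric.ball x δ₀, ∀ z ∈ Metric.ball x δ₀,
        dist (g y) (g z) ≤ lam n * dist y z

/-- `pullback g p n k` is `g n (g (n + 1) (⋯ (g (n + k - 1) (p (n + k)))))`, a point of `X n`.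
The recursion is on `k` with `n` varying, so that no casts between the `X n` are needed. -/
def pullback {X : ℕ → Type*} (g : ∀ n, X (n + 1) → X n) (p : ∀ n, X n) : ∀ n : ℕ, ℕ → X n
  | n, 0 => p n
  | n, k + 1 => g n (pullback g p (n + 1) k)

section

variable {X : ℕ → Type*} [∀ n, MetricSpace (X n)] {g : ∀ n, X (n + 1) → X n} {p : ∀ n, X n}
  {δ Λ : ℝ}

lemma pullback_dist_le (hδ : 0 ≤ δ)
    (hmap : ∀ n y, dist y (p (n + 1)) ≤ δ → dist (g n y) (p n) ≤ δ) (n k : ℕ) :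
    dist (pullback g p n k) (p n) ≤ δ := by
  induction k generalizing n with
  | zero => simpa [pullback] using hδ
  | succ k ih => exact hmap n _ (ih (n + 1))

lemma pullback_dist_succ_le (hδ : 0 ≤ δ) (hΛ : 0 ≤ Λ)
    (hmap : ∀ n y, dist y (p (n + 1)) ≤ δ → dist (g n y) (p n) ≤ δ)
    (hlip : ∀ n y z, dist y (p (n + 1)) ≤ δ → dist z (p (n + 1)) ≤ δ →
      dist (g n y) (g n z) ≤ Λ * dist y z) (n k : ℕ) :
    dist (pullback g p n k) (pullback g p n (k + 1)) ≤ δ * Λ ^ k := by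
  induction k generalizing n with
  | zero =>
    rw [dist_comm, pow_zero, mul_one]
    exact pullback_dist_le hδ hmap n 1
  | succ k ih =>
    calc dist (pullback g p n (k + 1)) (pullback g p n (k + 1 + 1))
        ≤ Λ * dist (pullback g p (n + 1) k) (pullback g p (n + 1) (k + 1)) :=
          hlip n _ _ (pullback_dist_le hδ hmap _ _) (pullback_dist_le hδ hmap _ _)
      _ ≤ Λ * (δ * Λ ^ k) := mul_le_mul_of_nonneg_left (ih (n + 1)) hΛ
      _ = δ * Λ ^ (k + 1) := by ring

end

/-- Lipschitz shadowing for expanding sequences: every `ζ`-pseudo-orbit with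
`ζ ≤ min ((1-Λ)δ/Λ) (δ₀ - δ)` is `δ`-shadowed by a true orbit. -/
theorem stmt2 {X : ℕ → Type*} [∀ n, MetricSpace (X n)]
    [∀ n, CompleteSpace (X n)] [∀ n, Nonempty (X n)]
    (f : ∀ n, X n → X (n + 1)) (hf : ∀ n, Continuous (f n))
    (δ₀ : ℝ) (hδ₀ : 0 < δ₀)
    (lam : ℕ → ℝ) (hlam : ∀ n, 0 < lam n ∧ lam n < 1)
    (Λ : ℝ) (hΛ1 : Λ < 1) (hΛ : ∀ n, lam n ≤ Λ)
    (hexp : IsExpandingSeq f δ₀ lam)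
    (δ ζ : ℝ) (hδ0 : 0 < δ) (hδδ₀ : δ < δ₀)
    (hζ0 : 0 < ζ) (hζ : ζ ≤ min ((1 - Λ) * δ / Λ) (δ₀ - δ))
    (p : ∀ n, X n) (hp : ∀ n : ℕ, dist (f n (p n)) (p (n + 1)) < ζ) :
    ∃ x : X 0, ∀ n : ℕ, dist (seqComp f n x) (p n) ≤ δ := by
  have hΛ0 : 0 < Λ := (hlam 0).1.trans_le (hΛ 0)
  have hζ1 : ζ * Λ ≤ (1 - Λ) * δ := (le_div_iff₀ hΛ0).1 (hζ.trans (min_le_left _ _))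
  have hζ2 : ζ ≤ δ₀ - δ := hζ.trans (min_le_right _ _)
  choose g hg hgp hgl using fun n => hexp.2 n (f n (p n)) (p n) rfl
  have hdist : ∀ n y, dist y (p (n + 1)) ≤ δ → dist y (f n (p n)) ≤ δ + ζ := fun n y hy => by
    have h1 := dist_triangle_right y (f n (p n)) (p (n + 1))
    linarith [hp n]
  -- The strict inequality in the definition of a pseudo-orbit is what places the closed ball
  -- inside the open one when `δ + ζ = δ₀`.
  have hball : ∀ n y, dist y (p (n + 1)) ≤ δ → y ∈ Metric.ball (f n (p n)) δ₀ := fun n y hy => by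
    have h1 := dist_triangle_right y (f n (p n)) (p (n + 1))
    rw [Metric.mem_ball]
    linarith [hp n]
  have hlip : ∀ n, ∀ y ∈ Metric.ball (f n (p n)) δ₀, ∀ z ∈ Metric.ball (f n (p n)) δ₀,
      dist (g n y) (g n z) ≤ Λ * dist y z := fun n y hy z hz =>
    (hgl n y hy z hz).trans (mul_le_mul_of_nonneg_right (hΛ n) dist_nonneg)
  have hmap : ∀ n y, dist y (p (n + 1)) ≤ δ → dist (g n y) (p n) ≤ δ := fun n y hy => by
    have h1 := hlip n y (hball n y hy) _ (Metric.mem_ball_self hδ₀)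
    rw [hgp n] at h1
    have h2 := mul_le_mul_of_nonneg_left (hdist n y hy) hΛ0.le
    linarith
  have hlim : ∀ n, ∃ w, Filter.Tendsto (pullback g p n) Filter.atTop (nhds w) := fun n =>
    cauchySeq_tendsto_of_complete <| cauchySeq_of_le_geometric Λ δ hΛ1 <|
      pullback_dist_succ_le hδ0.le hΛ0.le hmap
        (fun n y z hy hz => hlip n y (hball n y hy) z (hball n z hz)) n
  choose w hw using hlim
  have hwp : ∀ n, dist (w n) (p n) ≤ δ := fun n =>
    le_of_tendsto ((hw n).dist tendsto_const_nhds)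
      (Filter.Eventually.of_forall (pullback_dist_le hδ0.le hmap n))
  have hfw : ∀ n, f n (w n) = w (n + 1) := fun n => by
    have h1 : Filter.Tendsto (fun k => f n (pullback g p n (k + 1))) Filter.atTop
        (nhds (f n (w n))) :=
      ((hf n).tendsto (w n)).comp ((hw n).comp (Filter.tendsto_add_atTop_nat 1))
    have h2 : (fun k => f n (pullback g p n (k + 1))) = pullback g p (n + 1) :=
      funext fun k => hg n _ (hball n _ (pullback_dist_le hδ0.le hmap (n + 1) k))
    rw [h2] at h1
    exact tendsto_nhds_unique h1 (hw (n + 1))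
  have horbit : ∀ n, seqComp f n (w 0) = w n := fun n => by
    induction n with
    | zero => rfl
    | succ n ih => rw [seqComp, Function.comp_apply, ih, hfw]
  exact ⟨w 0, fun n => (horbit n).symm ▸ hwp n⟩
end

section
/- (Uniqueness of quasi-conjugacies under expansiveness.) Let 𝓕 = {f_n} and 𝓖 = {g_n} be sequences of continuous maps of a compact metric space X, and assume 𝓖 is expansive with expansiveness constant ε₀ > 0. Let h : X → X be a β-quasi-conjugacy between 𝓕 and 𝓖 with 0 < β < ε₀/4, and let h̃ : X → X be a homeomorphism with h̃ ≠ h and sup_{x∈X} d(h(x), h̃(x)) < ε₀/4. Then h̃ is not a β-quasi-conjugacy between 𝓕 and 𝓖; more precisely, there exist n ≥ 0 and x ∈ X with d(h̃(F_n(x)), G_n(h̃(x))) > ε₀/2 > β. -/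
/-- Compositions `F_0 = id`, `F_{n+1} = f_n ∘ F_n` of a sequence of self-maps. -/
def comps {X : Type*} (f : ℕ → X → X) : ℕ → X → X
  | 0 => id
  | n + 1 => f n ∘ comps f n

/-- Uniqueness of quasi-conjugacies under expansiveness: if `h` is a
`β`-quasi-conjugacy between `𝓕` and `𝓖` with `β < ε₀/4`, `𝓖` is expansive with
constant `ε₀`, and `h̃ ≠ h` is a homeomorphism `C⁰`-distance `< ε₀/4` from `h`,
then `h̃` fails to be a `β`-quasi-conjugacy: at some `n` and `x` the defect
exceeds `ε₀/2 > β`. -/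
theorem stmt5 {X : Type*} [MetricSpace X] [CompactSpace X]
    (f g : ℕ → X → X)
    (hf : ∀ n, Continuous (f n)) (hg : ∀ n, Continuous (g n))
    (ε₀ : ℝ) (hε₀ : 0 < ε₀)
    (hGexp : ∀ x y : X, x ≠ y → ∃ n : ℕ, ε₀ < dist (comps g n x) (comps g n y))
    (β : ℝ) (hβ0 : 0 < β) (hβ : β < ε₀ / 4)
    (h : X ≃ₜ X)
    (hquasi : ∀ n : ℕ, ∀ x : X, dist (h (comps f n x)) (comps g n (h x)) ≤ β)
    (htil : X ≃ₜ X) (hne : htil ≠ h)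
    (hclose : ∀ x : X, dist (h x) (htil x) < ε₀ / 4) :
    ∃ n : ℕ, ∃ x : X,
      ε₀ / 2 < dist (htil (comps f n x)) (comps g n (htil x)) ∧ β < ε₀ / 2 := by
  -- Some `x` has `h x ≠ h̃ x`; expansiveness separates their `𝓖`-orbits by more than `ε₀` at
  -- a time `n`, and the triangle inequality through `h (F_n x)` and `h̃ (F_n x)` gives a defect
  -- above `ε₀ - β - ε₀/4 > ε₀/2`.
  obtain ⟨x, hx⟩ : ∃ x, htil x ≠ h x := by
    by_contra! hall
    exact hne (Homeomorph.ext hall)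
  obtain ⟨n, hn⟩ := hGexp (h x) (htil x) hx.symm
  refine ⟨n, x, ?_, by linarith⟩
  have h₁ := hquasi n x
  rw [dist_comm] at h₁
  have h₂ := hclose (comps f n x)
  have h₃ := dist_triangle4 (comps g n (h x)) (h (comps f n x)) (htil (comps f n x))
    (comps g n (htil x))
  linarith
end

section
/- (Entropy invariance for convergent sequences.) Let X be a compact metric space, f : X → X continuous, 𝓕 = {f_n}_{n≥0} a sequence of continuous maps of X with compositions F_0 = id and F_n = f_{n-1} ∘ ⋯ ∘ f_0, and suppose there are homeomorphisms h and h_n (n ≥ 0) of X such that h_n ∘ f^n = F_n ∘ h for every n ≥ 0 and sup_{x∈X} d(h_n(x), x) → 0 as n → ∞. Then for every subset Z ⊆ X one has h_{h(Z)}(𝓕) = h_Z(f), where the entropies are defined via maximal cardinalities of separated sets. In particular h_{top}(𝓕) = h_{top}(f). -/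
/-!
Write `F_n` for the compositions `comps f_ n`. Since `h_n → id` uniformly, the families `(h_n)` and
`(h_n⁻¹)` are both uniformly equicontinuous (`equicont_of_tendsto_id`). The relations
`F_n ∘ h = h_n ∘ f^n` and `f^n ∘ h⁻¹ = h_n⁻¹ ∘ F_n` therefore show that for each `ε > 0` there is
`δ > 0`, independent of `n`, such that `h⁻¹` carries `(n,ε)`-separated sets for `F` to
`(n,δ)`-separated sets for `f`, and `h` does the same with the roles exchanged. Comparing maximal
cardinalities, which are finite by compactness (`bddAbove_sep`), gives both entropy inequalities
(`entropyOn_image_le`).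
-/

open Filter

/-- `s_n(𝓕, ε, Z)`: the maximal cardinality of an `(n,ε)`-separated subset of `Z`
for the sequence with compositions `F`. -/
noncomputable def maxSep {X : Type*} [MetricSpace X] (F : ℕ → X → X)
    (Z : Set X) (n : ℕ) (ε : ℝ) : ℕ :=
  sSup {k : ℕ | ∃ E : Finset X, ↑E ⊆ Z ∧
    (∀ x ∈ E, ∀ y ∈ E, x ≠ y → ∃ j < n, ε < dist (F j x) (F j y)) ∧ E.card = k}

/-- The topological entropy of the sequence with compositions `F` on the set `Z`,
`h_Z(𝓕) = lim_{ε→0} limsup_n (1/n) log s_n(𝓕, ε, Z)` (the limit as `ε → 0⁺` being a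
supremum, by monotonicity in `ε`). -/
noncomputable def entropyOn {X : Type*} [MetricSpace X] (F : ℕ → X → X)
    (Z : Set X) : EReal :=
  ⨆ (ε : ℝ) (_ : 0 < ε),
    limsup (fun n : ℕ => ((Real.log (maxSep F Z n ε) / n : ℝ) : EReal)) atTop

/-- A sequence of continuous self-maps of a compact space converging uniformly to the identity is
uniformly equicontinuous: all but finitely many of its members are uniformly close to the
identity, and the remaining ones are uniformly continuous. -/
theorem equicont_of_tendsto_id {X : Type*} [MetricSpace X] [CompactSpace X]
    (g : ℕ → X → X) (hg : ∀ n, Continuous (g n))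
    (hC0 : ∀ ε > (0 : ℝ), ∃ N : ℕ, ∀ n ≥ N, ∀ x : X, dist (g n x) x < ε)
    (ε : ℝ) (hε : 0 < ε) :
    ∃ δ > (0 : ℝ), ∀ n x y, dist x y ≤ δ → dist (g n x) (g n y) ≤ ε := by
  have hfin : ∀ N : ℕ, ∃ δ > (0 : ℝ), ∀ n < N, ∀ x y, dist x y ≤ δ →
      dist (g n x) (g n y) ≤ ε := by
    intro N
    induction N with
    | zero => exact ⟨1, one_pos, fun n hn => absurd hn (Nat.not_lt_zero n)⟩
    | succ N ih =>
      obtain ⟨δ, hδ, H⟩ := ih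
      obtain ⟨η, hη, H'⟩ := Metric.uniformContinuous_iff.1
        (CompactSpace.uniformContinuous_of_continuous (hg N)) ε hε
      refine ⟨min δ (η / 2), by positivity, fun n hn x y hxy => ?_⟩
      rcases Nat.lt_succ_iff_lt_or_eq.1 hn with hn | rfl
      · exact H n hn x y (hxy.trans (min_le_left _ _))
      · exact (H' (lt_of_le_of_lt (hxy.trans (min_le_right _ _)) (half_lt_self hη))).le
  obtain ⟨N, hN⟩ := hC0 (ε / 3) (by positivity)
  obtain ⟨δ, hδ, H⟩ := hfin N
  refine ⟨min δ (ε / 3), by positivity, fun n x y hxy => ?_⟩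
  rcases lt_or_ge n N with hn | hn
  · exact H n hn x y (hxy.trans (min_le_left _ _))
  · have h1 := hN n hn x
    have h2 := hN n hn y
    have h3 := hxy.trans (min_le_right _ _)
    have h4 := dist_triangle4 (g n x) x y (g n y)
    rw [dist_comm y] at h4
    linarith

/-- By compactness the cardinalities of `(n,ε)`-separated sets are bounded, so that the supremum
of natural numbers defining `maxSep` is a genuine one. -/
theorem bddAbove_sep {X : Type*} [MetricSpace X] [CompactSpace X]
    (F : ℕ → X → X) (hF : ∀ n, Continuous (F n)) (Z : Set X) (n : ℕ) (ε : ℝ) (hε : 0 < ε) :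
    BddAbove {k : ℕ | ∃ E : Finset X, ↑E ⊆ Z ∧
      (∀ x ∈ E, ∀ y ∈ E, x ≠ y → ∃ j < n, ε < dist (F j x) (F j y)) ∧ E.card = k} := by
  -- Uniform continuity of `x ↦ (F_0 x, …, F_{n-1} x)` controls all `n` iterates at once.
  have hΦ : Continuous (fun x : X => fun j : Fin n => F j x) :=
    continuous_pi fun j => hF j
  obtain ⟨δ, hδ, H⟩ := Metric.uniformContinuous_iff.1
    (CompactSpace.uniformContinuous_of_continuous hΦ) ε hε
  obtain ⟨t, -, htf, ht⟩ := Metric.totallyBounded_iff.1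
    (isCompact_univ (X := X)).totallyBounded (δ / 2) (by positivity) |>.imp
      fun t ht => (⟨trivial, ht.1, ht.2⟩ : True ∧ _ ∧ _)
  have hc : ∀ x : X, ∃ c ∈ t, dist x c < δ / 2 := by
    intro x
    simpa using ht (Set.mem_univ x)
  choose c hct hcd using hc
  refine ⟨htf.toFinset.card, ?_⟩
  rintro k ⟨E, -, hsep, rfl⟩
  refine Finset.card_le_card_of_injOn c (fun x _ => by simpa using hct x) ?_
  intro x hx y hy hxy
  by_contra hne
  obtain ⟨j, hj, hlt⟩ := hsep x hx y hy hne
  have hd : dist x y < δ := by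
    have h1 := dist_triangle_right x y (c x)
    have h2 := hcd x
    have h3 := hcd y
    rw [← hxy] at h3
    linarith
  have := (dist_le_pi_dist _ _ (⟨j, hj⟩ : Fin n)).trans_lt (H hd)
  exact absurd this (not_lt.2 hlt.le)

/-- If `e` makes the orbits of `B` uniformly controlled by those of `A`, then `e` pulls
`(n,ε)`-separated sets for `B` back to `(n,δ)`-separated sets for `A`, whence the entropy
inequality. -/
theorem entropyOn_image_le {X : Type*} [MetricSpace X] [CompactSpace X]
    (A B : ℕ → X → X) (hA : ∀ n, Continuous (A n)) (e : X ≃ X)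
    (hAB : ∀ ε > (0 : ℝ), ∃ δ > (0 : ℝ), ∀ n x y,
      dist (A n x) (A n y) ≤ δ → dist (B n (e x)) (B n (e y)) ≤ ε) (Z : Set X) :
    entropyOn B (e '' Z) ≤ entropyOn A Z := by
  refine iSup₂_le fun ε hε => ?_
  obtain ⟨δ, hδ, H⟩ := hAB ε hε
  refine le_trans ?_ (le_iSup₂ (f := fun (ε : ℝ) (_ : 0 < ε) =>
    limsup (fun n : ℕ => ((Real.log (maxSep A Z n ε) / n : ℝ) : EReal)) atTop) δ hδ)
  refine limsup_le_limsup (Eventually.of_forall fun n => ?_)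
  have hle : maxSep B (e '' Z) n ε ≤ maxSep A Z n δ := by
    refine csSup_le ⟨0, ∅, by simp⟩ ?_
    rintro k ⟨E, hEZ, hsep, rfl⟩
    refine le_csSup (bddAbove_sep A hA Z n δ hδ)
      ⟨E.map e.symm.toEmbedding, ?_, ?_, Finset.card_map _⟩
    · intro x hx
      obtain ⟨y, hy, rfl⟩ := Finset.mem_map.1 (Finset.mem_coe.1 hx)
      obtain ⟨z, hz, rfl⟩ := hEZ hy
      simpa using hz
    · intro x hx y hy hxy
      obtain ⟨a, ha, rfl⟩ := Finset.mem_map.1 hx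
      obtain ⟨b, hb, rfl⟩ := Finset.mem_map.1 hy
      obtain ⟨j, hj, hlt⟩ := hsep a ha b hb (fun hh => hxy (by rw [hh]))
      refine ⟨j, hj, ?_⟩
      by_contra hcon
      have := H j _ _ (not_lt.1 hcon)
      simp only [Equiv.coe_toEmbedding, Equiv.apply_symm_apply] at this
      exact absurd hlt (not_lt.2 this)
  have hlog : Real.log (maxSep B (e '' Z) n ε) ≤ Real.log (maxSep A Z n δ) := by
    -- An empty `Z` gives `log 0 = 0`, which is below the logarithm of any natural number.
    rcases Nat.eq_zero_or_pos (maxSep B (e '' Z) n ε) with h0 | h0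
    · rw [h0]
      simpa using Real.log_natCast_nonneg _
    · exact Real.log_le_log (by exact_mod_cast h0) (by exact_mod_cast hle)
  exact EReal.coe_le_coe_iff.2 (div_le_div_of_nonneg_right hlog (Nat.cast_nonneg n))

theorem continuous_comps {X : Type*} [MetricSpace X] (f : ℕ → X → X)
    (hf : ∀ n, Continuous (f n)) (n : ℕ) : Continuous (comps f n) := by
  induction n with
  | zero => exact continuous_id
  | succ n ih => exact (hf n).comp ih

/-- Entropy invariance: if `h_n ∘ f^n = F_n ∘ h` with `sup_x d(h_n x, x) → 0`, then
`h_{h(Z)}(𝓕) = h_Z(f)` for every `Z ⊆ X`; in particular `h_top(𝓕) = h_top(f)`. -/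
theorem stmt12 {X : Type*} [MetricSpace X] [CompactSpace X]
    (f : X → X) (hf : Continuous f)
    (f_ : ℕ → X → X) (hf_ : ∀ n, Continuous (f_ n))
    (h : X ≃ₜ X) (h_ : ℕ → X ≃ₜ X)
    (hconj : ∀ n : ℕ, ∀ x : X, h_ n (f^[n] x) = comps f_ n (h x))
    (hC0 : ∀ ε > (0 : ℝ), ∃ N : ℕ, ∀ n ≥ N, ∀ x : X, dist (h_ n x) x < ε) :
    (∀ Z : Set X, entropyOn (comps f_) (⇑h '' Z) = entropyOn (fun j => f^[j]) Z) ∧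
    entropyOn (comps f_) Set.univ = entropyOn (fun j => f^[j]) Set.univ := by
  have key : ∀ Z : Set X, entropyOn (comps f_) (⇑h '' Z) = entropyOn (fun j => f^[j]) Z := by
    intro Z
    refine le_antisymm ?_ ?_
    · refine entropyOn_image_le (fun j => f^[j]) (comps f_) (fun n => hf.iterate n) h.toEquiv
        (fun ε hε => ?_) Z
      obtain ⟨δ, hδ, H⟩ := equicont_of_tendsto_id (fun n => h_ n)
        (fun n => (h_ n).continuous) hC0 ε hε
      refine ⟨δ, hδ, fun n x y hxy => ?_⟩
      simpa [hconj] using H n _ _ hxy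
    · have hle := entropyOn_image_le (comps f_) (fun j => f^[j]) (continuous_comps f_ hf_)
        h.symm.toEquiv (fun ε hε => ?_) (⇑h '' Z)
      · simpa [Set.image_image] using hle
      -- The inverses `h_n⁻¹` are as uniformly close to the identity as the `h_n` are.
      · obtain ⟨δ, hδ, H⟩ := equicont_of_tendsto_id (fun n => (h_ n).symm)
          (fun n => (h_ n).symm.continuous) (fun ε hε => by
            obtain ⟨N, hN⟩ := hC0 ε hε
            refine ⟨N, fun n hn x => ?_⟩
            simpa [dist_comm] using hN n hn ((h_ n).symm x)) ε hε
        refine ⟨δ, hδ, fun n x y hxy => ?_⟩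
        have hc : ∀ z, (h_ n).symm (comps f_ n z) = f^[n] (h.symm z) := fun z => by
          rw [Homeomorph.symm_apply_eq, hconj, Homeomorph.apply_symm_apply]
        simpa [hc] using H n _ _ hxy
  refine ⟨key, ?_⟩
  have hu := key Set.univ
  rwa [Set.image_univ, h.surjective.range_eq] at hu
end
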